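/- Let C ⊆ ℝⁿ be a body of revolution. Then there exist a unique body of revolution C̃ ⊆ ℝⁿ whose topological boundary contains no vertical segment of positive length (i.e., there are no x ∈ ℝⁿ and ℓ′ > 0 with {x + s·e_n : 0 ≤ s ≤ ℓ′} contained in the boundary of C̃) and a unique real number ℓ ≥ 0 such that C equals the Minkowski sum C̃ + {s·e_n : 0 ≤ s ≤ ℓ}. -/

import Mathlib

open Set Filter Topology Function
open scoped RealInnerProductSpace Pointwise

/-- Euclidean space `ℝ^(n+1)`. -/
abbrev Euc (n : ℕ) := EuclideanSpace ℝ (Fin (n + 1))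

/-- The last standard basis vector `e_n`. -/
noncomputable def eAx (n : ℕ) : Euc n := EuclideanSpace.single (Fin.last n) (1 : ℝ)

/-- Support function of a set `K`. -/
noncomputable def suppFn {n : ℕ} (K : Set (Euc n)) (u : Euc n) : ℝ :=
  sSup ((fun x => ⟪x, u⟫) '' K)

/-- The face of `K` in direction `u`. -/
def face {n : ℕ} (K : Set (Euc n)) (u : Euc n) : Set (Euc n) :=
  {x ∈ K | ⟪x, u⟫ = suppFn K u}

/-- `C` is a body of revolution with axis `e_n`: it is invariant under every linear
isometry fixing `e_n`. -/
def IsRevBody {n : ℕ} (C : Set (Euc n)) : Prop :=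
  C.Nonempty ∧ IsCompact C ∧ Convex ℝ C ∧
    ∀ ρ : Euc n ≃ₗᵢ[ℝ] Euc n, ρ (eAx n) = eAx n → ρ '' C = C

/-- The restricted support function `h̄_C(t) = h_C(t·e_n + √(1-t²)·ū)`. -/
noncomputable def hbar {n : ℕ} (C : Set (Euc n)) (ub : Euc n) (t : ℝ) : ℝ :=
  suppFn C (t • eAx n + Real.sqrt (1 - t ^ 2) • ub)

/-- The height of a point above the hyperplane orthogonal to the axis. -/
noncomputable def height (n : ℕ) : Euc n →L[ℝ] ℝ := innerSL ℝ (eAx n)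

/-- The component of a point orthogonal to the axis. -/
noncomputable def horPart (n : ℕ) : Euc n →L[ℝ] Euc n :=
  ContinuousLinearMap.id ℝ (Euc n) - (height n).smulRight (eAx n)

section Coordinates

variable {n : ℕ}

lemma norm_eAx : ‖eAx n‖ = 1 := by simp [eAx]

lemma height_apply (x : Euc n) : height n x = ⟪eAx n, x⟫ := rfl

lemma horPart_apply (x : Euc n) : horPart n x = x - height n x • eAx n := rfl

@[simp]
lemma height_eAx : height n (eAx n) = 1 := by
  rw [height_apply, real_inner_self_eq_norm_sq, norm_eAx, one_pow]

@[simp]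
lemma horPart_eAx : horPart n (eAx n) = 0 := by simp [horPart_apply]

@[simp]
lemma height_horPart (x : Euc n) : height n (horPart n x) = 0 := by simp [horPart_apply]

@[simp]
lemma horPart_horPart (x : Euc n) : horPart n (horPart n x) = horPart n x := by
  rw [horPart_apply, height_horPart, zero_smul, sub_zero]

lemma horPart_add_height (x : Euc n) : horPart n x + height n x • eAx n = x := by
  simp [horPart_apply]

lemma ext_horPart_height {x y : Euc n} (h : horPart n x = horPart n y)
    (h' : height n x = height n y) : x = y := by
  rw [← horPart_add_height x, ← horPart_add_height y, h, h']

lemma exists_horizontal_ne_zero (hn : 1 ≤ n) : ∃ v : Euc n, v ≠ 0 ∧ height n v = 0 := by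
  refine ⟨EuclideanSpace.single 0 1, by simp, ?_⟩
  have h : Fin.last n ≠ 0 := by
    intro h
    have := congrArg Fin.val h
    simp at this
    omega
  rw [height_apply, eAx, EuclideanSpace.inner_single_left]
  simp [h]

/-- Linear isometries fixing the axis act transitively on horizontal spheres. -/
lemma exists_isometry_horizontal {u v : Euc n} (hu : height n u = 0) (hv : height n v = 0)
    (huv : ‖u‖ = ‖v‖) : ∃ ρ : Euc n ≃ₗᵢ[ℝ] Euc n, ρ (eAx n) = eAx n ∧ ρ u = v := by
  refine ⟨(ℝ ∙ (u - v))ᗮ.reflection, ?_, Submodule.reflection_sub huv⟩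
  apply Submodule.reflection_mem_subspace_eq_self
  rw [Submodule.mem_orthogonal_singleton_iff_inner_left, ← height_apply, map_sub, hu, hv, sub_zero]

/-- A horizontal vector of norm at most `r` is a multiple of one of norm `r`. -/
lemma exists_smul_eq_of_norm_le {u w : Euc n} (hu : height n u = 0) (hw : height n w = 0)
    (h : ‖u‖ ≤ ‖w‖) : ∃ (v : Euc n) (t : ℝ), height n v = 0 ∧ ‖v‖ = ‖w‖ ∧ 0 ≤ t ∧ t ≤ 1 ∧
      u = t • v := by
  rcases eq_or_ne u 0 with rfl | h0
  · exact ⟨w, 0, hw, rfl, le_rfl, zero_le_one, by simp⟩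
  · have hu' : 0 < ‖u‖ := norm_pos_iff.2 h0
    have hw' : 0 < ‖w‖ := hu'.trans_le h
    refine ⟨(‖w‖ / ‖u‖) • u, ‖u‖ / ‖w‖, by simp [hu], ?_, by positivity,
      (div_le_one hw').2 h, ?_⟩
    · rw [norm_smul, Real.norm_of_nonneg (by positivity)]
      field_simp
    · rw [smul_smul]
      field_simp
      simp

end Coordinates

section Segments

variable {n : ℕ}

lemma Convex.mem_of_vertical {C : Set (Euc n)} (hC : Convex ℝ C) {a b y : Euc n} (ha : a ∈ C)
    (hb : b ∈ C) (hya : horPart n a = horPart n y) (hyb : horPart n b = horPart n y)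
    (h1 : height n a ≤ height n y) (h2 : height n y ≤ height n b) : y ∈ C := by
  rcases h1.eq_or_lt with h1 | h1
  · rwa [← ext_horPart_height hya h1]
  have hpos : 0 < height n b - height n a := by linarith
  have key := hC ha hb (a := (height n b - height n y) / (height n b - height n a))
    (b := (height n y - height n a) / (height n b - height n a))
    (div_nonneg (by linarith) hpos.le) (div_nonneg (by linarith) hpos.le) (by field_simp; ring)
  convert key using 1
  apply ext_horPart_height
  · rw [map_add, map_smul, map_smul, hya, hyb, ← add_smul]
    rw [show (height n b - height n y) / (height n b - height n a) +
      (height n y - height n a) / (height n b - height n a) = 1 by field_simp; ring, one_smul]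
  · simp only [map_add, map_smul, smul_eq_mul]
    field_simp
    ring

end Segments

namespace IsRevBody

variable {n : ℕ} {C : Set (Euc n)}

lemma mem_of_norm_horPart_eq (hC : IsRevBody C) {x y : Euc n} (hx : x ∈ C)
    (hR : ‖horPart n x‖ = ‖horPart n y‖) (hh : height n x = height n y) : y ∈ C := by
  obtain ⟨ρ, hρ, hρx⟩ := exists_isometry_horizontal (height_horPart x) (height_horPart y) hR
  rw [← hC.2.2.2 ρ hρ]
  refine ⟨x, hx, ?_⟩
  rw [← horPart_add_height x, map_add, map_smul, hρ, hρx, hh, horPart_add_height]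

/-- A body of revolution contains the horizontal disk through each of its points. -/
lemma mem_of_norm_horPart_le (hC : IsRevBody C) {x y : Euc n} (hx : x ∈ C)
    (hR : ‖horPart n y‖ ≤ ‖horPart n x‖) (hh : height n x = height n y) : y ∈ C := by
  obtain ⟨v, t, hv, hvx, ht0, ht1, hy⟩ :=
    exists_smul_eq_of_norm_le (height_horPart y) (height_horPart x) hR
  have hPv : horPart n v = v := by rw [horPart_apply, hv, zero_smul, sub_zero]
  have h1 : v + height n x • eAx n ∈ C :=
    hC.mem_of_norm_horPart_eq hx (by simp [hPv, hvx]) (by simp [hv])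
  have h2 : -v + height n x • eAx n ∈ C :=
    hC.mem_of_norm_horPart_eq hx (by simp [hPv, hvx]) (by simp [hv])
  have hconv : Convex ℝ C := hC.2.2.1
  have key := hconv h1 h2 (a := (1 + t) / 2) (b := (1 - t) / 2) (by linarith) (by linarith)
    (by ring)
  convert key using 1
  rw [← horPart_add_height y, hy, hh]
  module

/-- Points of a body of revolution strictly inside a vertical segment and not of maximal distance
from the axis are interior. -/
lemma mem_interior (hC : IsRevBody C) {a b m p : Euc n} (ha : a ∈ C) (hb : b ∈ C) (hp : p ∈ C)
    (ham : horPart n a = horPart n m) (hbm : horPart n b = horPart n m)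
    (h1 : height n a < height n m) (h2 : height n m < height n b)
    (hR : ‖horPart n m‖ < ‖horPart n p‖) : m ∈ interior C := by
  obtain ⟨v, t, hv, hvp, ht0, ht1, hm⟩ :=
    exists_smul_eq_of_norm_le (height_horPart m) (height_horPart p) hR.le
  have hPv : horPart n v = v := by rw [horPart_apply, hv, zero_smul, sub_zero]
  have hv0 : 0 < ‖v‖ := hvp ▸ (norm_nonneg _).trans_lt hR
  have ht1 : t < 1 := by
    rw [hm, norm_smul, Real.norm_of_nonneg ht0, ← hvp] at hR
    exact lt_of_mul_lt_mul_right (by simpa using hR) hv0.le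
  set q := v + height n p • eAx n with hq
  have hqP : horPart n q = v := by simp [hq, hPv]
  have hqh : height n q = height n p := by simp [hq, hv]
  have hqC : q ∈ C := hC.mem_of_norm_horPart_eq hp (by rw [hqP, hvp]) hqh.symm
  obtain ⟨c, hc0, hc1, hca, hcb⟩ : ∃ c : ℝ, 0 < c ∧ c < 1 ∧
      (1 - c) * height n a + c * height n p < height n m ∧
      height n m < (1 - c) * height n b + c * height n p := by
    have e1 : ∀ᶠ c in 𝓝[>] (0 : ℝ), (1 - c) * height n a + c * height n p < height n m := by
      have : Continuous fun c : ℝ => (1 - c) * height n a + c * height n p := by fun_prop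
      exact (this.tendsto' 0 (height n a) (by simp)).mono_left nhdsWithin_le_nhds
        |>.eventually_lt_const h1
    have e2 : ∀ᶠ c in 𝓝[>] (0 : ℝ), height n m < (1 - c) * height n b + c * height n p := by
      have : Continuous fun c : ℝ => (1 - c) * height n b + c * height n p := by fun_prop
      exact (this.tendsto' 0 (height n b) (by simp)).mono_left nhdsWithin_le_nhds
        |>.eventually_const_lt h2
    have e3 : ∀ᶠ c in 𝓝[>] (0 : ℝ), c ∈ Ioo (0 : ℝ) 1 := Ioo_mem_nhdsGT one_pos
    obtain ⟨c, hc, hc', hc''⟩ := (e1.and (e2.and e3)).exists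
    exact ⟨c, hc''.1, hc''.2, hc, hc'⟩
  set a' := (1 - c) • a + c • q with ha'
  set b' := (1 - c) • b + c • q with hb'
  have ha'C : a' ∈ C := hC.2.2.1 ha hqC (by linarith) hc0.le (by ring)
  have hb'C : b' ∈ C := hC.2.2.1 hb hqC (by linarith) hc0.le (by ring)
  have hnorm : ‖((1 - c) * t + c) • v‖ = ((1 - c) * t + c) * ‖v‖ := by
    rw [norm_smul, Real.norm_of_nonneg (by nlinarith)]
  have ha'R : ‖horPart n a'‖ = ((1 - c) * t + c) * ‖v‖ := by
    rw [← hnorm, ha', map_add, map_smul, map_smul, ham, hm, hqP, smul_smul, ← add_smul]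
  have hb'R : ‖horPart n b'‖ = ((1 - c) * t + c) * ‖v‖ := by
    rw [← hnorm, hb', map_add, map_smul, map_smul, hbm, hm, hqP, smul_smul, ← add_smul]
  rw [mem_interior_iff_mem_nhds]
  have n1 : ∀ᶠ y in 𝓝 m, ‖horPart n y‖ < ((1 - c) * t + c) * ‖v‖ := by
    refine (horPart n).continuous.norm.continuousAt.eventually_lt_const ?_
    change ‖horPart n m‖ < _
    rw [hm, norm_smul, Real.norm_of_nonneg ht0]
    exact mul_lt_mul_of_pos_right (by nlinarith) hv0
  have n2 : ∀ᶠ y in 𝓝 m, height n a' < height n y := by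
    refine (height n).continuous.continuousAt.eventually_const_lt ?_
    simpa [ha', hqh] using hca
  have n3 : ∀ᶠ y in 𝓝 m, height n y < height n b' := by
    refine (height n).continuous.continuousAt.eventually_lt_const ?_
    simpa [hb', hqh] using hcb
  filter_upwards [n1, n2, n3] with y hy1 hy2 hy3
  refine hC.2.2.1.mem_of_vertical (a := horPart n y + height n a' • eAx n)
    (b := horPart n y + height n b' • eAx n) ?_ ?_ (by simp) (by simp) (by simpa using hy2.le)
    (by simpa using hy3.le)
  · exact hC.mem_of_norm_horPart_le ha'C (by simpa [ha'R] using hy1.le) (by simp)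
  · exact hC.mem_of_norm_horPart_le hb'C (by simpa [hb'R] using hy1.le) (by simp)

end IsRevBody

section Uniqueness

variable {n : ℕ}

/-- Points of maximal distance from the axis are boundary points. -/
lemma mem_frontier_of_norm_horPart_max (hn : 1 ≤ n) {D : Set (Euc n)} {d : Euc n} (hd : d ∈ D)
    (hmax : ∀ x ∈ D, ‖horPart n x‖ ≤ ‖horPart n d‖) : d ∈ frontier D := by
  refine ⟨subset_closure hd, fun hint => ?_⟩
  obtain ⟨v, hv0, hv, hdv⟩ : ∃ v : Euc n, v ≠ 0 ∧ height n v = 0 ∧ 0 ≤ ⟪horPart n d, v⟫ := by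
    obtain ⟨v, hv0, hv⟩ := exists_horizontal_ne_zero hn
    rcases le_total 0 ⟪horPart n d, v⟫ with h | h
    · exact ⟨v, hv0, hv, h⟩
    · exact ⟨-v, neg_ne_zero.2 hv0, by simp [hv], by simpa using h⟩
  have hPv : horPart n v = v := by rw [horPart_apply, hv, zero_smul, sub_zero]
  have hlim : ∀ᶠ c in 𝓝[>] (0 : ℝ), d + c • v ∈ D := by
    have hcont : Continuous fun c : ℝ => d + c • v := by fun_prop
    exact ((hcont.tendsto' 0 d (by simp)).mono_left nhdsWithin_le_nhds).eventually
      (mem_interior_iff_mem_nhds.1 hint)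
  obtain ⟨c, hcD, hc⟩ := (hlim.and self_mem_nhdsWithin).exists
  have hc : 0 < c := hc
  have hle := hmax _ hcD
  rw [map_add, map_smul, hPv] at hle
  have hsq := pow_le_pow_left₀ (norm_nonneg _) hle 2
  rw [norm_add_sq_real, real_inner_smul_right, norm_smul, Real.norm_of_nonneg hc.le] at hsq
  have : 0 < c * ‖v‖ := mul_pos hc (norm_pos_iff.2 hv0)
  nlinarith [mul_nonneg hc.le hdv]

lemma exists_norm_horPart_max {D : Set (Euc n)} (hD : IsRevBody D) :
    ∃ d ∈ D, ∀ x ∈ D, ‖horPart n x‖ ≤ ‖horPart n d‖ :=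
  hD.2.1.exists_isMaxOn hD.1 (horPart n).continuous.norm.continuousOn

/-- A body of revolution without vertical boundary segments has at most one point of maximal
distance from the axis on each vertical line. -/
lemma height_le_of_no_vertical_segment (hn : 1 ≤ n) {D : Set (Euc n)} (hD : IsRevBody D)
    (hseg : ¬ ∃ (x : Euc n) (l : ℝ), 0 < l ∧ ∀ s ∈ Icc (0 : ℝ) l, x + s • eAx n ∈ frontier D)
    {d d' : Euc n} (hd : d ∈ D) (hd' : d' ∈ D) (hP : horPart n d' = horPart n d)
    (hmax : ∀ x ∈ D, ‖horPart n x‖ ≤ ‖horPart n d‖) : height n d' ≤ height n d := by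
  by_contra! hlt
  refine hseg ⟨d, height n d' - height n d, by linarith, fun s hs => ?_⟩
  have hsP : horPart n (d + s • eAx n) = horPart n d := by simp
  refine mem_frontier_of_norm_horPart_max hn ?_ (by rwa [hsP])
  exact hD.2.2.1.mem_of_vertical hd hd' hsP.symm (by rw [hP, hsP]) (by simpa using hs.1)
    (by simp; linarith [hs.2])

lemma mem_add_vertical_iff {D : Set (Euc n)} {l : ℝ} {x : Euc n} :
    x ∈ D + (fun s => s • eAx n) '' Icc (0 : ℝ) l ↔
      ∃ d ∈ D, ∃ s ∈ Icc (0 : ℝ) l, d + s • eAx n = x := by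
  simp [Set.mem_add]

/-- The summand of a vertical segment is recovered from the sum. -/
lemma eq_inter_of_add_vertical {D : Set (Euc n)} (hD : Convex ℝ D) {l : ℝ} (hl : 0 ≤ l)
    {C : Set (Euc n)} (hC : C = D + (fun s => s • eAx n) '' Icc (0 : ℝ) l) :
    D = {x | x ∈ C ∧ x + l • eAx n ∈ C} := by
  subst hC
  ext x
  simp only [mem_ofPred_eq, mem_add_vertical_iff]
  constructor
  · exact fun hx => ⟨⟨x, hx, 0, ⟨le_rfl, hl⟩, by simp⟩, ⟨x, hx, l, ⟨hl, le_rfl⟩, rfl⟩⟩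
  · rintro ⟨⟨d, hd, s, hs, hds⟩, d', hd', s', hs', hds'⟩
    have h1 := congrArg (horPart n) hds
    have h2 := congrArg (height n) hds
    have h3 := congrArg (horPart n) hds'
    have h4 := congrArg (height n) hds'
    simp only [map_add, map_smul, horPart_eAx, smul_zero, add_zero, height_eAx, smul_eq_mul,
      mul_one] at h1 h2 h3 h4
    exact hD.mem_of_vertical hd hd' h1 h3 (by linarith [hs.1]) (by linarith [hs'.2])

lemma length_le_of_add_vertical_eq (hn : 1 ≤ n) {D D' : Set (Euc n)} {l l' : ℝ}
    (hD : IsRevBody D) (hD' : IsRevBody D') (hl' : 0 ≤ l')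
    (hseg : ¬ ∃ (x : Euc n) (l : ℝ), 0 < l ∧ ∀ s ∈ Icc (0 : ℝ) l, x + s • eAx n ∈ frontier D)
    (h : D + (fun s => s • eAx n) '' Icc (0 : ℝ) l =
      D' + (fun s => s • eAx n) '' Icc (0 : ℝ) l') : l' ≤ l := by
  obtain ⟨p, hp, hmax⟩ := exists_norm_horPart_max hD'
  obtain ⟨d, hd, s, hs, hds⟩ := mem_add_vertical_iff.1
    (h.symm ▸ mem_add_vertical_iff.2 ⟨p, hp, 0, ⟨le_rfl, hl'⟩, by simp⟩ :
      p ∈ D + (fun s => s • eAx n) '' Icc (0 : ℝ) l)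
  obtain ⟨d', hd', s', hs', hds'⟩ := mem_add_vertical_iff.1
    (h.symm ▸ mem_add_vertical_iff.2 ⟨p, hp, l', ⟨hl', le_rfl⟩, rfl⟩ :
      p + l' • eAx n ∈ D + (fun s => s • eAx n) '' Icc (0 : ℝ) l)
  have h1 := congrArg (horPart n) hds
  have h2 := congrArg (height n) hds
  have h3 := congrArg (horPart n) hds'
  have h4 := congrArg (height n) hds'
  simp only [map_add, map_smul, horPart_eAx, smul_zero, add_zero, height_eAx, smul_eq_mul,
    mul_one] at h1 h2 h3 h4
  have := height_le_of_no_vertical_segment hn hD hseg hd hd' (h3.trans h1.symm) fun x hx => by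
    obtain ⟨y, hy, t, ht, hyt⟩ := mem_add_vertical_iff.1
      (h ▸ mem_add_vertical_iff.2 ⟨x, hx, 0, ⟨le_rfl, hs.1.trans hs.2⟩, by simp⟩ :
        x ∈ D' + (fun s => s • eAx n) '' Icc (0 : ℝ) l')
    have hyx := congrArg (horPart n) hyt
    simp only [map_add, map_smul, horPart_eAx, smul_zero, add_zero] at hyx
    rw [← hyx, h1]
    exact hmax y hy
  linarith [hs.1, hs'.2]

end Uniqueness

section Existence

variable {n : ℕ} {C : Set (Euc n)}

/-- The vertical segments of `C` at maximal distance from the axis have a maximal length. -/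
lemma exists_longest_rim_segment (hC : IsRevBody C) :
    ∃ p ∈ C, ∃ l : ℝ, 0 ≤ l ∧ p + l • eAx n ∈ C ∧ (∀ x ∈ C, ‖horPart n x‖ ≤ ‖horPart n p‖) ∧
      ∀ x ∈ C, ∀ y ∈ C, ‖horPart n x‖ = ‖horPart n p‖ → ‖horPart n y‖ = ‖horPart n p‖ →
        height n y - height n x ≤ l := by
  obtain ⟨d, hd, hmax⟩ := exists_norm_horPart_max hC
  have hK : IsCompact (C ∩ {x | ‖horPart n x‖ = ‖horPart n d‖}) :=
    hC.2.1.inter_right (isClosed_eq (horPart n).continuous.norm continuous_const)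
  have hcont : Continuous fun z : Euc n × Euc n => height n z.2 - height n z.1 := by fun_prop
  obtain ⟨⟨x, y⟩, ⟨hx, hy⟩, hxy⟩ := (hK.prod hK).exists_isMaxOn ⟨(d, d), ⟨hd, rfl⟩, ⟨hd, rfl⟩⟩
    hcont.continuousOn
  have hRx : ‖horPart n x‖ = ‖horPart n d‖ := hx.2
  have hRy : ‖horPart n y‖ = ‖horPart n d‖ := hy.2
  refine ⟨x, hx.1, height n y - height n x, ?_, ?_, by rwa [hRx], ?_⟩
  · simpa using hxy (⟨hx, hx⟩ : (x, x) ∈ _ ×ˢ _)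
  · exact hC.mem_of_norm_horPart_eq hy.1 (by simp [hRx, hRy]) (by simp)
  · intro a ha b hb hRa hRb
    exact hxy (mem_prod.2 ⟨⟨ha, hRa.trans hRx⟩, ⟨hb, hRb.trans hRx⟩⟩ :
      (a, b) ∈ (C ∩ {x | ‖horPart n x‖ = ‖horPart n d‖}) ×ˢ
        (C ∩ {x | ‖horPart n x‖ = ‖horPart n d‖}))

lemma isRevBody_inter_translate (hC : IsRevBody C) {l : ℝ}
    (hne : {x | x ∈ C ∧ x + l • eAx n ∈ C}.Nonempty) :
    IsRevBody {x | x ∈ C ∧ x + l • eAx n ∈ C} := by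
  have hcont : Continuous fun x : Euc n => x + l • eAx n := by fun_prop
  refine ⟨hne, hC.2.1.inter_right (hC.2.1.isClosed.preimage hcont),
    hC.2.2.1.inter (hC.2.2.1.translate_preimage_left _), fun ρ hρ => ?_⟩
  have hmem : ∀ x, ρ x ∈ C ↔ x ∈ C := fun x => by
    conv_lhs => rw [← hC.2.2.2 ρ hρ]
    exact ρ.injective.mem_set_image
  ext y
  obtain ⟨x, rfl⟩ := ρ.surjective y
  rw [ρ.injective.mem_set_image]
  have hx : ρ x + l • eAx n = ρ (x + l • eAx n) := by rw [map_add, map_smul, hρ]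
  simp only [mem_ofPred_eq, hx, hmem]

lemma eq_add_vertical (hC : IsRevBody C) {p : Euc n} {l : ℝ} (hl : 0 ≤ l) (hp : p ∈ C)
    (hpl : p + l • eAx n ∈ C) (hmax : ∀ x ∈ C, ‖horPart n x‖ ≤ ‖horPart n p‖) :
    C = {x | x ∈ C ∧ x + l • eAx n ∈ C} + (fun s => s • eAx n) '' Icc (0 : ℝ) l := by
  ext z
  rw [mem_add_vertical_iff]
  constructor
  · intro hz
    set c := horPart n z + height n p • eAx n with hc
    have hcP : horPart n c = horPart n z := by simp [hc]
    have hch : height n c = height n p := by simp [hc]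
    have hcC : c ∈ C := hC.mem_of_norm_horPart_le hp (by rw [hcP]; exact hmax z hz) hch.symm
    have hclC : c + l • eAx n ∈ C :=
      hC.mem_of_norm_horPart_le hpl (by simpa [hcP] using hmax z hz) (by simp [hch])
    have hconv := hC.2.2.1
    rcases le_total (height n z) (height n c) with h | h
    · exact ⟨z, ⟨hz, hconv.mem_of_vertical hz hclC (by simp) (by simp [hcP]) (by simpa using hl)
        (by simpa using h)⟩, 0, ⟨le_rfl, hl⟩, by simp⟩
    rcases le_total (height n z) (height n c + l) with h' | h'
    · refine ⟨c, ⟨hcC, hclC⟩, height n z - height n c, ⟨by linarith, by linarith⟩, ?_⟩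
      exact ext_horPart_height (by simp [hcP]) (by simp)
    · refine ⟨z - l • eAx n, ⟨hconv.mem_of_vertical hcC hz (by simp [hcP]) (by simp) ?_ ?_,
        by simpa using hz⟩, l, ⟨hl, le_rfl⟩, by simp⟩
      · simp
        linarith
      · simpa using hl
  · rintro ⟨d, ⟨hd, hdl⟩, s, hs, rfl⟩
    exact hC.2.2.1.mem_of_vertical hd hdl (by simp) (by simp) (by simpa using hs.1)
      (by simpa using hs.2)

lemma no_vertical_segment_frontier_inter_translate (hC : IsRevBody C) {p : Euc n} {l : ℝ}
    (hp : p ∈ C) (hpl : p + l • eAx n ∈ C) (hmax : ∀ x ∈ C, ‖horPart n x‖ ≤ ‖horPart n p‖)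
    (hlong : ∀ x ∈ C, ∀ y ∈ C, ‖horPart n x‖ = ‖horPart n p‖ → ‖horPart n y‖ = ‖horPart n p‖ →
      height n y - height n x ≤ l) :
    ¬ ∃ (x : Euc n) (l' : ℝ), 0 < l' ∧
      ∀ s ∈ Icc (0 : ℝ) l', x + s • eAx n ∈ frontier {x | x ∈ C ∧ x + l • eAx n ∈ C} := by
  have hD := isRevBody_inter_translate hC ⟨p, hp, hpl⟩
  rintro ⟨x, l', hl', hfr⟩
  have hx := hD.2.1.isClosed.frontier_subset (hfr 0 ⟨le_rfl, hl'.le⟩)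
  have hx' := hD.2.1.isClosed.frontier_subset (hfr l' ⟨hl'.le, le_rfl⟩)
  rcases (hmax x (by simpa using hx.1)).eq_or_lt with hR | hR
  · have := hlong x (by simpa using hx.1) _ hx'.2 hR (by simpa using hR)
    simp at this
    linarith
  · refine (hfr (l' / 2) ⟨by linarith, by linarith⟩).2 ?_
    exact hD.mem_interior hx hx' ⟨hp, hpl⟩ (by simp) (by simp) (by simpa using hl')
      (by simpa using hl') (by simpa using hR)

end Existence

/-- Every body of revolution `C` decomposes uniquely as a Minkowski sum
`C = C̃ + {s·e_n : 0 ≤ s ≤ ℓ}` where `C̃` is a body of revolution whose boundary contains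
no vertical segment of positive length and `ℓ ≥ 0`. -/
theorem revBody_unique_decomposition {n : ℕ} (hn : 1 ≤ n) (C : Set (Euc n))
    (hC : IsRevBody C) :
    ∃! p : Set (Euc n) × ℝ,
      IsRevBody p.1 ∧
      (¬ ∃ (x : Euc n) (l : ℝ), 0 < l ∧
        ∀ s ∈ Set.Icc (0 : ℝ) l, x + s • eAx n ∈ frontier p.1) ∧
      0 ≤ p.2 ∧
      C = p.1 + (fun s => s • eAx n) '' Set.Icc (0 : ℝ) p.2 := by
  obtain ⟨p, hp, l, hl, hpl, hmax, hlong⟩ := exists_longest_rim_segment hC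
  have hD := isRevBody_inter_translate hC ⟨p, hp, hpl⟩
  have hseg := no_vertical_segment_frontier_inter_translate hC hp hpl hmax hlong
  have hsum := eq_add_vertical hC hl hp hpl hmax
  refine ⟨({x | x ∈ C ∧ x + l • eAx n ∈ C}, l), ⟨hD, hseg, hl, hsum⟩, ?_⟩
  rintro ⟨D, l'⟩ ⟨hD', hseg', hl', hsum'⟩
  have heq := hsum.symm.trans hsum'
  obtain rfl : l' = l := le_antisymm
    (length_le_of_add_vertical_eq hn hD hD' hl' hseg heq)
    (length_le_of_add_vertical_eq hn hD' hD hl hseg' heq.symm)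
  exact Prod.ext (eq_inter_of_add_vertical hD'.2.2.1 hl' hsum') rfl
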